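/- Let S be a regular AG-groupoid with a left identity e, and let f and g be (∈,∈∨q)-fuzzy bi-ideals of S. Then the 0.5-product f ∘₀.₅ g is also an (∈,∈∨q)-fuzzy bi-ideal of S. -/

import Mathlib

/-- An AG-groupoid: a magma satisfying the left invertive law `(ab)c = (cb)a`. -/
def LeftInvertive (S : Type*) [Mul S] : Prop := ∀ a b c : S, a * b * c = c * b * a

/-- A fuzzy subset: a function into `[0,1]`. -/
def IsFuzzy {S : Type*} (f : S → ℝ) : Prop := ∀ x, 0 ≤ f x ∧ f x ≤ 1

/-- An `(∈,∈∨q)`-fuzzy bi-ideal of an AG-groupoid. -/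
def FuzzyBiIdealQ {S : Type*} [Mul S] (f : S → ℝ) : Prop :=
  (∀ x y : S, min (min (f x) (f y)) (1 / 2) ≤ f (x * y)) ∧
  (∀ x y z : S, min (min (f x) (f z)) (1 / 2) ≤ f (x * y * z))

/-- The `0.5`-product of fuzzy subsets. -/
noncomputable def prod05 {S : Type*} [Mul S] (f g : S → ℝ) (a : S) : ℝ :=
  sSup {v : ℝ | ∃ b c : S, a = b * c ∧ v = min (min (f b) (g c)) (1 / 2)}

/-!
The map `f ↦ {x | t < f x}` for `t < 1 / 2` reduces the theorem to ordinary bi-ideals: `f` is an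
`(∈,∈∨q)`-fuzzy bi-ideal exactly when all these cuts are bi-ideals, and, when every element of `S`
is a product, the cut of `f ∘₀.₅ g` is the setwise product of the cuts of `f` and `g`. For bi-ideals
`A` and `B`, the medial law `(ab)(cd) = (ac)(bd)` holds for subsets as well and gives
`(AB)(AB) = (AA)(BB) ⊆ AB`, while writing `S = SS` gives `(AB)(SS)(AB) = ((AS)A)((BS)B) ⊆ AB`.
-/

/-- The medial (or entropic) law: multiplication `S × S → S` is a homomorphism of magmas. It
allows the factors of a product of bi-ideals to be regrouped. -/
def Medial (S : Type*) [Mul S] : Prop := ∀ a b c d : S, a * b * (c * d) = a * c * (b * d)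

theorem LeftInvertive.medial {S : Type*} [Mul S] (hS : LeftInvertive S) : Medial S :=
  fun a b c d ↦ calc
    a * b * (c * d) = c * d * b * a := hS a b (c * d)
    _ = b * d * c * a := by rw [hS c d b]
    _ = a * c * (b * d) := hS (b * d) c a

theorem min_min_le_iff_forall_lt {α : Type*} [LinearOrder α] {a b c d : α} :
    min (min a b) c ≤ d ↔ ∀ t < c, t < a → t < b → t < d := by
  rw [← forall_lt_iff_le]
  simp only [lt_min_iff]
  exact ⟨fun h _ hc ha hb ↦ h ⟨⟨ha, hb⟩, hc⟩, fun h _ ⟨⟨ha, hb⟩, hc⟩ ↦ h _ hc ha hb⟩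

section Pointwise

open Set
open scoped Pointwise

variable {S : Type*} [Mul S]

theorem Medial.set (hS : Medial S) : Medial (Set S) :=
  fun _ _ _ _ ↦ image2_image2_image2_comm hS

theorem univ_mul_univ_of_left_identity {e : S} (he : ∀ x : S, e * x = x) :
    (univ * univ : Set S) = univ :=
  eq_univ_of_forall fun x ↦ ⟨e, mem_univ e, x, mem_univ x, he x⟩

/-- A (crisp) bi-ideal of a magma: the cuts of `(∈,∈∨q)`-fuzzy bi-ideals are of this kind. The empty
set is allowed, since a cut may be empty. -/
structure IsBiIdeal (A : Set S) : Prop where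
  mul_subset : A * A ⊆ A
  mul_univ_mul_subset : A * univ * A ⊆ A

theorem IsBiIdeal.mul (hS : Medial S) (hmul : (univ * univ : Set S) = univ) {A B : Set S}
    (hA : IsBiIdeal A) (hB : IsBiIdeal B) : IsBiIdeal (A * B) where
  mul_subset := calc
    A * B * (A * B) = A * A * (B * B) := hS.set A B A B
    _ ⊆ A * B := mul_subset_mul hA.mul_subset hB.mul_subset
  mul_univ_mul_subset := calc
    A * B * univ * (A * B) = A * B * (univ * univ) * (A * B) := by rw [hmul]
    _ = A * univ * (B * univ) * (A * B) := by rw [hS.set A B univ univ]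
    _ = A * univ * A * (B * univ * B) := hS.set (A * univ) (B * univ) A B
    _ ⊆ A * B := mul_subset_mul hA.mul_univ_mul_subset hB.mul_univ_mul_subset

theorem fuzzyBiIdealQ_iff_forall_isBiIdeal_ofPred_lt {f : S → ℝ} :
    FuzzyBiIdealQ f ↔ ∀ t < 1 / 2, IsBiIdeal {x | t < f x} := by
  simp only [FuzzyBiIdealQ, min_min_le_iff_forall_lt]
  constructor
  · rintro ⟨hmul, htriple⟩ t ht
    constructor
    · rintro _ ⟨x, hx, y, hy, rfl⟩
      exact hmul x y t ht hx hy
    · rintro _ ⟨_, ⟨x, hx, y, -, rfl⟩, z, hz, rfl⟩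
      exact htriple x y z t ht hx hz
  · intro h
    exact ⟨fun x y t ht hx hy ↦ (h t ht).mul_subset (mul_mem_mul hx hy),
      fun x y z t ht hx hz ↦
        (h t ht).mul_univ_mul_subset (mul_mem_mul (mul_mem_mul hx (mem_univ y)) hz)⟩

theorem ofPred_lt_prod05 (hmul : (univ * univ : Set S) = univ) (f g : S → ℝ) {t : ℝ}
    (ht : t < 1 / 2) : {x | t < prod05 f g x} = {x | t < f x} * {x | t < g x} := by
  ext a
  have hbdd : BddAbove {v | ∃ b c, a = b * c ∧ v = min (min (f b) (g c)) (1 / 2)} := by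
    refine ⟨1 / 2, ?_⟩
    rintro _ ⟨b, c, -, rfl⟩
    exact min_le_right _ _
  -- Outside `S * S`, `prod05 f g` is `sSup ∅ = 0`.
  have hne : {v | ∃ b c, a = b * c ∧ v = min (min (f b) (g c)) (1 / 2)}.Nonempty := by
    obtain ⟨b, -, c, -, hbc⟩ : a ∈ (univ * univ : Set S) := hmul ▸ mem_univ a
    exact ⟨_, b, c, hbc.symm, rfl⟩
  rw [mem_ofPred_eq, prod05, lt_csSup_iff hbdd hne, mem_mul]
  constructor
  · rintro ⟨_, ⟨b, c, rfl, rfl⟩, hlt⟩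
    obtain ⟨⟨hb, hc⟩, -⟩ := by simpa only [lt_min_iff] using hlt
    exact ⟨b, hb, c, hc, rfl⟩
  · rintro ⟨b, hb, c, hc, rfl⟩
    exact ⟨_, ⟨b, c, rfl, rfl⟩, lt_min (lt_min hb hc) ht⟩

theorem prod05_fuzzy_biIdealQ_of_regular_general (hS : Medial S)
    (hmul : (univ * univ : Set S) = univ) {f g : S → ℝ}
    (hf : FuzzyBiIdealQ f) (hg : FuzzyBiIdealQ g) : FuzzyBiIdealQ (prod05 f g) := by
  rw [fuzzyBiIdealQ_iff_forall_isBiIdeal_ofPred_lt] at hf hg ⊢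
  intro t ht
  rw [ofPred_lt_prod05 hmul f g ht]
  exact (hf t ht).mul hS hmul (hg t ht)

end Pointwise

/-- if `S` is a regular AG-groupoid with a left identity `e` and `f`, `g` are
`(∈,∈∨q)`-fuzzy bi-ideals of `S`, then `f ∘₀.₅ g` is also an `(∈,∈∨q)`-fuzzy bi-ideal. -/
theorem prod05_fuzzy_biIdealQ_of_regular {S : Type*} [Mul S] (hS : LeftInvertive S)
    (e : S) (he : ∀ x : S, e * x = x)
    (hreg : ∀ a : S, ∃ x : S, a = a * x * a)
    (f g : S → ℝ) (hf : IsFuzzy f) (hg : IsFuzzy g)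
    (hfb : FuzzyBiIdealQ f) (hgb : FuzzyBiIdealQ g) :
    FuzzyBiIdealQ (prod05 f g) :=
  prod05_fuzzy_biIdealQ_of_regular_general hS.medial (univ_mul_univ_of_left_identity he) hfb hgb
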